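/- arXiv:1902.05671 — 4 statements merged into one kernel-verified Lean document; each statement's English description precedes it below -/
import Mathlib

section
/- For every integer k ≥ 2, the Laplacian spectrum of the k-vertex antiregular graph A_k consists of k distinct simple eigenvalues, namely the set Λ_k = {0, 1, 2, …, k} \ {⌈k/2⌉}. -/
/-!
Write `H` for the `0/1` matrix with `H i j = 1` iff `i + j < k` (diagonal included). The loops of
`H` compensate the missing loops in the degrees, so that the Laplacian is `diag (k - i) - H`, i.e.
`(L x) i = (k - i) * x i - ∑_{j < k - i} x j` (`antiregLap_mulVec`).

The graph `A_k` arises by alternately adding an isolated and a dominating vertex, so every vertex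
set met on the way is an interval of indices whose last added vertex is an endpoint. The vector
that is `1` on the older vertices of the interval, balances them at the endpoint so that the total
is `0`, and vanishes elsewhere is an eigenvector: the interval `[a, k - a]` with endpoint `k - a`
gives the eigenvalue `a` for `2 a < k` (for `a = 0` this is the all-ones vector), and the interval
`[a, k - 1 - a]` with endpoint `a` gives the eigenvalue `k - a` for `2 a + 2 ≤ k`. These are the
`k` distinct members of `{0, …, k} \ {⌈k/2⌉}`, and the characteristic polynomial has degree `k`,
so there are no other roots and all are simple.
-/

/-- Laplacian matrix of the `k`-vertex antiregular graph, vertices `0,…,k-1`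
(0-indexed; 1-indexed vertices `i+1` and `j+1` are adjacent iff
`(i+1)+(j+1) ≤ k+1`, i.e. vertices are in nonincreasing degree order). -/
def antiregLap (k : ℕ) : Matrix (Fin k) (Fin k) ℝ :=
  Matrix.of fun i j =>
    if i = j then
      ((Finset.univ.filter fun m : Fin k => m ≠ i ∧ i.val + m.val + 2 ≤ k + 1).card : ℝ)
    else if i.val + j.val + 2 ≤ k + 1 then -1 else 0

lemma antiregLap_apply (k : ℕ) (i j : Fin k) :
    antiregLap k i j =
      (if i = j then ((k : ℝ) - (i : ℕ)) else 0) - (if (j : ℕ) < k - i then 1 else 0) := by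
  have hi := i.isLt
  have hcard : (Finset.univ.filter fun m : Fin k => (m : ℕ) < k - i).card = k - i := by
    rw [Fin.card_filter_val_lt]
    omega
  by_cases hij : i = j
  · subst hij
    have hset : (Finset.univ.filter fun m : Fin k => m ≠ i ∧ i.val + m.val + 2 ≤ k + 1) =
        (Finset.univ.filter fun m : Fin k => (m : ℕ) < k - i).erase i := by
      ext m
      simp only [Finset.mem_filter, Finset.mem_univ, true_and, Finset.mem_erase]
      refine and_congr_right fun _ => ?_
      omega
    simp only [antiregLap, Matrix.of_apply, if_true, hset]
    rw [Finset.card_erase_eq_ite, hcard]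
    simp only [Finset.mem_filter, Finset.mem_univ, true_and]
    split_ifs with h
    · rw [Nat.cast_sub (by omega), Nat.cast_sub hi.le, Nat.cast_one]
    · rw [Nat.cast_sub hi.le, sub_zero]
  · simp only [antiregLap, Matrix.of_apply, if_neg hij]
    split_ifs <;> first | omega | norm_num

lemma antiregLap_mulVec (k : ℕ) (x : ℕ → ℝ) (i : Fin k) :
    (antiregLap k).mulVec (fun j => x j) i =
      ((k : ℝ) - (i : ℕ)) * x i - ∑ j ∈ Finset.range (k - i), x j := by
  have hsum : ∑ j : Fin k, (if (j : ℕ) < k - i then x j else 0) =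
      ∑ j ∈ Finset.range (k - i), x j := by
    rw [Fin.sum_univ_eq_sum_range (fun j => if j < k - i then x j else 0) k,
      ← Finset.sum_filter]
    refine Finset.sum_congr ?_ fun _ _ => rfl
    ext j
    simp only [Finset.mem_filter, Finset.mem_range]
    omega
  simp only [Matrix.mulVec, dotProduct, antiregLap_apply, sub_mul, ite_mul, zero_mul, one_mul,
    Finset.sum_sub_distrib, hsum, Finset.sum_ite_eq, Finset.mem_univ, if_true]

lemma isRoot_of_vec (k : ℕ) (t : ℝ) (x : ℕ → ℝ) (hx : ∃ i < k, x i ≠ 0)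
    (h : ∀ i < k, ((k : ℝ) - i) * x i - ∑ j ∈ Finset.range (k - i), x j = t * x i) :
    (antiregLap k).charpoly.IsRoot t := by
  rw [Polynomial.IsRoot, Matrix.eval_charpoly, ← Matrix.exists_mulVec_eq_zero_iff]
  refine ⟨fun j => x j, ?_, ?_⟩
  · obtain ⟨i, hi, hne⟩ := hx
    exact fun h0 => hne (congrFun h0 ⟨i, hi⟩)
  · ext i
    rw [Matrix.sub_mulVec, Pi.sub_apply, antiregLap_mulVec, h i i.isLt]
    simp [Matrix.scalar_apply, Matrix.mulVec_diagonal]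

/-- The balanced vector on `[a, k - a]` with special endpoint `k - a`; its partial sums climb by
one from `a` to `k - a` and then drop to `0`. -/
lemma isRoot_low (k a : ℕ) (ha : 2 * a < k) : (antiregLap k).charpoly.IsRoot (a : ℝ) := by
  set x : ℕ → ℝ := fun j =>
    if j < a then 0 else if j < k - a then 1 else if j = k - a then -((k : ℝ) - 2 * a) else 0
    with hxdef
  have hS : ∀ n, ∑ j ∈ Finset.range n, x j =
      if n ≤ a then 0 else if n ≤ k - a then (n : ℝ) - a else 0 := by
    intro n
    induction n with
    | zero => simp
    | succ n ih =>
      rw [Finset.sum_range_succ, ih, hxdef]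
      push_cast
      rcases lt_trichotomy n (k - a) with hn | hn | hn
      · rcases lt_trichotomy n a with hn' | hn' | hn'
        · simp [hn', hn'.le, Nat.succ_le_of_lt hn']
        · subst hn'
          simp [hn, Nat.succ_le_of_lt hn]
        · rw [if_neg (by omega), if_pos (by omega), if_neg (by omega), if_pos hn,
            if_neg (by omega), if_pos (by omega)]
          ring
      · rw [if_neg (by omega), if_pos (by omega), if_neg (by omega), if_neg (by omega), if_pos hn,
          if_neg (by omega), if_neg (by omega), hn, Nat.cast_sub (by omega)]
        ring
      · rw [if_neg (by omega), if_neg (by omega), if_neg (by omega), if_neg (by omega),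
          if_neg (by omega), if_neg (by omega), if_neg (by omega)]
        ring
  refine isRoot_of_vec k a x ⟨a, by omega, ?_⟩ fun i hi => ?_
  · simp only [hxdef]
    rw [if_neg (by omega), if_pos (by omega)]
    exact one_ne_zero
  · rw [hS, hxdef, Nat.cast_sub hi.le]
    have hc : i = k - a → (i : ℝ) = k - a := fun h => by rw [h, Nat.cast_sub (by omega)]
    dsimp only
    split_ifs with h1 h2 h3 h4 h5 h6 h7 h8 <;>
      first
        | omega
        | ring1
        | (rw [hc (by omega)]; ring1)

/-- The balanced vector on `[a, k - 1 - a]` with special endpoint `a`; its partial sums drop to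
`2 a + 1 - k` at `a` and then climb back to `0`. -/
lemma isRoot_high (k a : ℕ) (ha : 2 * a + 2 ≤ k) :
    (antiregLap k).charpoly.IsRoot ((k : ℝ) - a) := by
  set x : ℕ → ℝ := fun j =>
    if j < a then 0 else if j = a then -((k : ℝ) - 2 * a - 1) else if j < k - a then 1 else 0
    with hxdef
  have hS : ∀ n, ∑ j ∈ Finset.range n, x j =
      if n ≤ a then 0 else if n ≤ k - a then (n : ℝ) - (k - a) else 0 := by
    intro n
    induction n with
    | zero => simp
    | succ n ih =>
      rw [Finset.sum_range_succ, ih, hxdef]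
      push_cast
      have hc : n = k - a → (n : ℝ) = k - a := fun h => by rw [h, Nat.cast_sub (by omega)]
      have hc' : n = a → (n : ℝ) = a := fun h => by rw [h]
      split_ifs <;>
        first
          | omega
          | ring1
          | (rw [hc (by omega)]; ring1)
          | (rw [hc' (by omega)]; ring1)
  refine isRoot_of_vec k _ x ⟨a + 1, by omega, ?_⟩ fun i hi => ?_
  · simp only [hxdef]
    rw [if_neg (by omega), if_neg (by omega), if_pos (by omega)]
    exact one_ne_zero
  · rw [hS, hxdef, Nat.cast_sub hi.le]
    have hc : i = a → (i : ℝ) = a := fun h => by rw [h]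
    dsimp only
    split_ifs <;>
      first
        | omega
        | ring1
        | (rw [hc (by omega)]; ring1)

/-- for `k ≥ 2` the Laplacian spectrum of the `k`-vertex antiregular
graph consists of `k` distinct simple eigenvalues, namely
`Λ_k = {0, 1, …, k} \ {⌈k/2⌉}`: the multiset of roots of the characteristic
polynomial (eigenvalues with multiplicity) is exactly the image of this set.
Here `⌈k/2⌉ = (k+1)/2` in natural-number arithmetic. -/
theorem antireg_spectrum (k : ℕ) (hk : 2 ≤ k) :
    (antiregLap k).charpoly.roots =
      Multiset.map (fun m : ℕ => (m : ℝ)) ((Finset.range (k + 1)).erase ((k + 1) / 2)).val := by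
  have hne : (antiregLap k).charpoly ≠ 0 := (Matrix.charpoly_monic _).ne_zero
  symm
  apply Multiset.eq_of_le_of_card_le
  · rw [Multiset.le_iff_subset (Multiset.Nodup.map Nat.cast_injective (Finset.nodup _))]
    intro t ht
    obtain ⟨m, hm, rfl⟩ := Multiset.mem_map.1 ht
    rw [Finset.mem_val, Finset.mem_erase, Finset.mem_range] at hm
    rw [Polynomial.mem_roots hne]
    by_cases h : 2 * m < k
    · exact isRoot_low k m h
    · have := isRoot_high k (k - m) (by omega)
      rwa [Nat.cast_sub (by omega), sub_sub_cancel] at this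
  · refine (Polynomial.card_roots' _).trans ?_
    rw [Matrix.charpoly_natDegree_eq_dim, Fintype.card_fin, Multiset.card_map,
      Finset.card_val, Finset.card_erase_of_mem (Finset.mem_range.2 (by omega)),
      Finset.card_range]
    omega
end

section
/- Let k ≥ 2, n ≥ 1, κ̄ = ⌈k/2⌉, and let 𝓛 = I_n ⊗ L_A^{(k)} + Σ_{i=1}^{n−1} z_i z_iᵀ with z_i = e_{ik} − e_{ik+κ̄} ∈ ℝ^{nk}. If v ∈ ℝ^k is an eigenvector of L_A^{(k)} with eigenvalue λ whose k-th entry is zero (v_k = 0), then the vector x = (vᵀ, 0, …, 0)ᵀ ∈ ℝ^{nk}, obtained by appending (n−1)k zeros to v, satisfies 𝓛 x = λ x. -/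
/-- The vector `z_i = e_{ik} - e_{ik+κ̄}` (1-indexed, `κ̄ = ⌈k/2⌉`, `i = p+1`),
on the product index set: copy `p`, vertex `k` minus copy `p+1`, vertex `κ̄`. -/
def zvec (n k : ℕ) (hk : 2 ≤ k) (p : Fin (n - 1)) : Fin n × Fin k → ℝ :=
  fun q =>
    (if q = (⟨p.val, by have := p.isLt; omega⟩, ⟨k - 1, by omega⟩) then (1 : ℝ) else 0) -
    (if q = (⟨p.val + 1, by have := p.isLt; omega⟩, ⟨(k + 1) / 2 - 1, by omega⟩) then 1 else 0)

/-- `L̄ = I_n ⊗ L_A^{(k)}`, the Laplacian of `n` disjoint copies of the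
`k`-vertex antiregular graph, indexed by (copy, vertex). -/
def copiesLap (n k : ℕ) : Matrix (Fin n × Fin k) (Fin n × Fin k) ℝ :=
  Matrix.kroneckerMap (· * ·) (1 : Matrix (Fin n) (Fin n) ℝ) (antiregLap k)

/-- `𝓛 = I_n ⊗ L_A^{(k)} + Σ_{i=1}^{n-1} z_i z_iᵀ`, the Laplacian of `n`
interconnected copies of the `k`-vertex antiregular graph. -/
def interLap (n k : ℕ) (hk : 2 ≤ k) : Matrix (Fin n × Fin k) (Fin n × Fin k) ℝ :=
  copiesLap n k + ∑ p : Fin (n - 1), Matrix.vecMulVec (zvec n k hk p) (zvec n k hk p)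


theorem zvec_dotProduct_extend (k n : ℕ) (hk : 2 ≤ k) (hn : 1 ≤ n) (v : Fin k → ℝ)
    (hlt : k - 1 < k) (hlast : v ⟨k - 1, hlt⟩ = 0) (p : Fin (n - 1)) :
    zvec n k hk p ⬝ᵥ (fun q => if q.1 = (⟨0, hn⟩ : Fin n) then v q.2 else 0) = 0 := by
  simp only [zvec, dotProduct, sub_mul, Finset.sum_sub_distrib, ite_mul, one_mul, zero_mul,
    Finset.sum_ite_eq', Finset.mem_univ, if_true]
  simp [hlast]

theorem copiesLap_mulVec_extend (k n : ℕ) (hn : 1 ≤ n) (v : Fin k → ℝ) (lam : ℝ)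
    (heig : (antiregLap k).mulVec v = lam • v) :
    (copiesLap n k).mulVec (fun q => if q.1 = (⟨0, hn⟩ : Fin n) then v q.2 else 0) =
      lam • fun q : Fin n × Fin k => if q.1 = (⟨0, hn⟩ : Fin n) then v q.2 else 0 := by
  ext ⟨a, b⟩
  have h := congrFun heig b
  simp only [Matrix.mulVec, dotProduct, Pi.smul_apply, smul_eq_mul] at h
  simp only [copiesLap, Matrix.mulVec, dotProduct, Matrix.kroneckerMap_apply, Matrix.one_apply,
    Fintype.sum_prod_type, Pi.smul_apply, smul_eq_mul]
  rw [Finset.sum_eq_single a]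
  · by_cases ha : a = (⟨0, hn⟩ : Fin n)
    · simpa [ha] using h
    · simp [ha]
  · intro c _ hc
    simp [hc.symm]
  · simp

/-- if `v` is an eigenvector of `L_A^{(k)}` with eigenvalue `λ`
whose `k`-th (last) entry vanishes, then `x = (vᵀ, 0, …, 0)ᵀ` (supported on the
first copy) satisfies `𝓛 x = λ x`. -/
theorem eigvec_extension (k n : ℕ) (hk : 2 ≤ k) (hn : 1 ≤ n)
    (v : Fin k → ℝ) (lam : ℝ) (hv : v ≠ 0)
    (heig : (antiregLap k).mulVec v = lam • v)
    (hlast : v ⟨k - 1, by omega⟩ = 0) :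
    (interLap n k hk).mulVec (fun q => if q.1 = (⟨0, hn⟩ : Fin n) then v q.2 else 0) =
      lam • fun q : Fin n × Fin k => if q.1 = (⟨0, hn⟩ : Fin n) then v q.2 else 0 := by
  rw [interLap, Matrix.add_mulVec, copiesLap_mulVec_extend k n hn v lam heig, Matrix.sum_mulVec]
  simp [Matrix.vecMulVec_mulVec, zvec_dotProduct_extend k n hk hn v _ hlast]
end

section
/- Let k ≥ 2, n ≥ 2, κ̄ = ⌈k/2⌉, L̄ = I_n ⊗ L_A^{(k)}, and 𝓛 = L̄ + Σ_{i=1}^{n−1} z_i z_iᵀ with z_i = e_{ik} − e_{ik+κ̄}. Then for every j ∈ {0, 1, …, k−1}: λ_{nj+1}(L̄) = λ_{nj+1}(𝓛) = λ_{nj+2}(L̄) < λ_{nj+2}(𝓛), where λ_i(M) denotes the i-th smallest eigenvalue of the symmetric matrix M (with multiplicity). In particular the common value of the first three quantities equals the (j+1)-th smallest eigenvalue of L_A^{(k)}. -/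
/-! ### Eigenvectors of the antiregular graph

A `μ`-eigenvector of the Laplacian of `A_k` is written as `v : ℕ → ℝ`, restricted to the 0-indexed
vertices `a < k`. Since loops do not affect a Laplacian, the eigenvalue equation at `a` reads
`(k - a - μ) * v a = ∑ i < k - a, v i`. -/

section Linear

/-- Summing the eigenvalue equations of `A_k` expresses that the columns of its Laplacian sum to
zero, so an eigenvector for `μ` has `μ * ∑ v = 0`. -/
lemma antireg_mul_sum_eq_zero (k : ℕ) (μ : ℝ) (v : ℕ → ℝ)
    (h : ∀ a < k, ((k : ℝ) - a - μ) * v a = ∑ i ∈ Finset.range (k - a), v i) :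
    μ * ∑ i ∈ Finset.range k, v i = 0 := by
  have key : ∀ m : ℕ, ∑ a ∈ Finset.range m, ∑ i ∈ Finset.range (a + 1), v i
      = ∑ a ∈ Finset.range m, ((m : ℝ) - a) * v a := by
    intro m
    induction m with
    | zero => simp
    | succ m ih =>
      rw [Finset.sum_range_succ, ih, Finset.sum_range_succ _ m, Finset.sum_range_succ _ m,
        ← add_assoc, ← Finset.sum_add_distrib]
      push_cast
      congr 1
      · apply Finset.sum_congr rfl; intros; ring
      · ring
  have h1 : ∑ a ∈ Finset.range k, ((k : ℝ) - a - μ) * v a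
      = ∑ a ∈ Finset.range k, ∑ i ∈ Finset.range (a + 1), v i := by
    rw [← Finset.sum_range_reflect (fun a => ∑ i ∈ Finset.range (a + 1), v i) k]
    apply Finset.sum_congr rfl
    intro a ha
    rw [Finset.mem_range] at ha
    rw [h a ha]
    congr 2
    omega
  rw [key] at h1
  have h2 : ∑ a ∈ Finset.range k, ((k : ℝ) - a - μ) * v a
      = ∑ a ∈ Finset.range k, ((k : ℝ) - a) * v a - μ * ∑ i ∈ Finset.range k, v i := by
    rw [Finset.mul_sum, ← Finset.sum_sub_distrib]
    apply Finset.sum_congr rfl; intros; ring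
  linarith

/-- Deleting the dominating vertex and the pendant vertex of `A_{k+2}` leaves `A_k`; an eigenvector
vanishing at the dominating vertex restricts to an eigenvector with eigenvalue lowered by one. -/
lemma antireg_inner (k : ℕ) (μ : ℝ) (v : ℕ → ℝ)
    (h : ∀ a < k + 2, (((k + 2 : ℕ) : ℝ) - a - μ) * v a = ∑ i ∈ Finset.range (k + 2 - a), v i)
    (h0 : v 0 = 0) :
    ∀ a < k, ((k : ℝ) - a - (μ - 1)) * v (a + 1) = ∑ i ∈ Finset.range (k - a), v (i + 1) := by
  intro a ha
  have := h (a + 1) (by omega)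
  rw [show k + 2 - (a + 1) = (k - a) + 1 by omega, Finset.sum_range_succ', h0, add_zero] at this
  rw [← this]
  push_cast
  ring

lemma vanish_of_inner (k : ℕ) (v : ℕ → ℝ) (h0 : v 0 = 0) (hin : ∀ a < k, v (a + 1) = 0)
    (hS : ∑ i ∈ Finset.range (k + 2), v i = 0) : ∀ a < k + 2, v a = 0 := by
  have hlow : ∀ a < k + 1, v a = 0 := by
    intro a ha
    rcases a with _ | a
    · exact h0
    · exact hin a (by omega)
  rw [Finset.sum_range_succ, Finset.sum_eq_zero (fun i hi => hlow i (Finset.mem_range.1 hi)),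
    zero_add] at hS
  intro a ha
  rcases Nat.lt_succ_iff_lt_or_eq.1 ha with h | h
  · exact hlow a h
  · rw [h]; exact hS

/-- The Laplacian of `A_k` has no eigenvalue outside `[0, k]`. -/
lemma antireg_no_outside (k : ℕ) : ∀ (μ : ℝ) (v : ℕ → ℝ), (μ < 0 ∨ (k : ℝ) < μ) →
    (∀ a < k, ((k : ℝ) - a - μ) * v a = ∑ i ∈ Finset.range (k - a), v i) →
    ∀ a < k, v a = 0 := by
  induction k using Nat.strong_induction_on with
  | _ k ih =>
    intro μ v hμ h
    rcases k with _ | _ | k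
    · intro a ha; omega
    · intro a ha
      obtain rfl : a = 0 := by omega
      have := h 0 (by omega)
      have hne : μ ≠ 0 := by rcases hμ with h | h <;> [exact h.ne; (push_cast at h; linarith)]
      simp at this
      have : μ * v 0 = 0 := by linarith
      exact (mul_eq_zero.1 this).resolve_left hne
    · have hne : μ ≠ 0 := by
        rcases hμ with h | h
        · exact h.ne
        · push_cast at h; have : (0 : ℝ) ≤ k := Nat.cast_nonneg k
          intro h'; linarith
      have hS := (mul_eq_zero.1 (antireg_mul_sum_eq_zero _ μ v h)).resolve_left hne
      have h00 := h 0 (by omega)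
      rw [Nat.sub_zero, hS] at h00
      have h0 : v 0 = 0 := by
        refine (mul_eq_zero.1 h00).resolve_left ?_
        push_cast at hμ ⊢
        have : (0 : ℝ) ≤ k := Nat.cast_nonneg k
        rcases hμ with h | h <;> intro h' <;> linarith
      refine vanish_of_inner k v h0 ?_ hS
      refine ih k (by omega) (μ - 1) (fun a => v (a + 1)) ?_ (antireg_inner k μ v h h0)
      push_cast at hμ
      rcases hμ with h | h
      · left; linarith
      · right; linarith

/-- An eigenvector of `A_k` vanishing at the middle vertex `κ̄ = ⌈k/2⌉` is zero. -/
lemma antireg_middle (k : ℕ) : ∀ (μ : ℝ) (v : ℕ → ℝ),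
    (∀ a < k, ((k : ℝ) - a - μ) * v a = ∑ i ∈ Finset.range (k - a), v i) →
    v ((k + 1) / 2 - 1) = 0 → ∀ a < k, v a = 0 := by
  induction k using Nat.strong_induction_on with
  | _ k ih =>
    intro μ v h hmid
    rcases k with _ | _ | k
    · intro a ha; omega
    · intro a ha
      obtain rfl : a = 0 := by omega
      simpa using hmid
    rw [show (k + 1 + 1 + 1) / 2 - 1 = (k + 1) / 2 by omega] at hmid
    have hk0 : (0 : ℝ) ≤ k := Nat.cast_nonneg k
    by_cases hμ0 : μ = 0
    · -- `μ = 0`: subtracting the constant `v 0` leaves an interior eigenvector for `-1`.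
      subst hμ0
      have hu : ∀ a < k + 2, (((k + 2 : ℕ) : ℝ) - a - 0) * (v a - v 0)
          = ∑ i ∈ Finset.range (k + 2 - a), (v i - v 0) := by
        intro a ha
        have := h a ha
        rw [Finset.sum_sub_distrib, Finset.sum_const, Finset.card_range, nsmul_eq_mul,
          Nat.cast_sub ha.le, ← this]
        ring
      have hz := antireg_no_outside k (0 - 1) (fun a => v (a + 1) - v 0) (by left; norm_num)
        (antireg_inner k 0 (fun a => v a - v 0) hu (by simp))
      have hlast : v (k + 1) = v 0 := by
        have := h (k + 1) (by omega)
        rw [show k + 1 + 1 - (k + 1) = 1 by omega] at this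
        simpa using this
      have hall : ∀ a < k + 2, v a = v 0 := by
        intro a ha
        rcases a with _ | a
        · rfl
        · rcases Nat.lt_succ_iff_lt_or_eq.1 (Nat.succ_lt_succ_iff.1 ha) with h' | h'
          · have := hz a h'; linarith
          · rw [h']; exact hlast
      intro a ha
      rw [hall a ha, ← hall _ (by omega : (k + 1) / 2 < k + 2), hmid]
    have hS := (mul_eq_zero.1 (antireg_mul_sum_eq_zero _ μ v h)).resolve_left hμ0
    by_cases hμk : μ = k + 2
    · -- `μ = k + 2`: subtracting a multiple of `(-(k+1), 1, …, 1)` leaves an interior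
      -- eigenvector for `k + 1`, which exceeds the largest eigenvalue of `A_k`.
      subst hμk
      have h0 : v 0 = -(k + 1) * v (k + 1) := by
        have := h (k + 1) (by omega)
        rw [show k + 1 + 1 - (k + 1) = 1 by omega] at this
        simp at this
        linarith
      set c := v (k + 1) with hc
      have hin : ∀ a < k, ((k : ℝ) - a - ((k + 2 : ℝ) - 1)) * (v (a + 1) - c)
          = ∑ i ∈ Finset.range (k - a), (v (i + 1) - c) := by
        intro a ha
        have := h (a + 1) (by omega)
        rw [show k + 1 + 1 - (a + 1) = (k - a) + 1 by omega, Finset.sum_range_succ', h0] at this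
        rw [Finset.sum_sub_distrib, Finset.sum_const, Finset.card_range, nsmul_eq_mul,
          Nat.cast_sub ha.le]
        push_cast at this
        linarith
      have hz := antireg_no_outside k _ (fun a => v (a + 1) - c) (by right; linarith) hin
      have hpos : ∀ a < k + 1, v (a + 1) = c := by
        intro a ha
        rcases Nat.lt_succ_iff_lt_or_eq.1 ha with h' | h'
        · have := hz a h'; linarith
        · rw [h']
      have hc0 : c = 0 := by
        rcases hm : (k + 1) / 2 with _ | m
        · rw [hm, h0] at hmid
          refine (mul_eq_zero.1 hmid).resolve_left ?_
          intro h'; linarith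
        · rw [hm, hpos m (by omega)] at hmid
          exact hmid
      intro a ha
      rcases a with _ | a
      · rw [h0, hc0, mul_zero]
      · rw [hpos a (by omega), hc0]
    · have h00 := h 0 (by omega)
      rw [Nat.sub_zero, hS] at h00
      have h0 : v 0 = 0 := by
        refine (mul_eq_zero.1 h00).resolve_left ?_
        push_cast
        intro h'
        apply hμk
        linarith
      refine vanish_of_inner k v h0 ?_ hS
      rcases Nat.eq_zero_or_pos k with rfl | hkpos
      · intro a ha; omega
      refine ih k (by omega) (μ - 1) (fun a => v (a + 1)) (antireg_inner k μ v h h0) ?_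
      rw [show (k + 1) / 2 - 1 + 1 = (k + 1) / 2 by omega]
      exact hmid

end Linear

/-! ### Counting eigenvalues of symmetric matrices -/

section Spectral

open Matrix

variable {ι : Type*} [Fintype ι] [DecidableEq ι]

lemma dotProduct_mulVec_eq_sum {A : Matrix ι ι ℝ} (hA : A.IsHermitian) (x : ι → ℝ) :
    x ⬝ᵥ (A *ᵥ x) = ∑ i, hA.eigenvalues i * ((hA.eigenvectorBasis i).ofLp ⬝ᵥ x) ^ 2 := by
  have h := hA.eigenvectorBasis.sum_inner_mul_inner (WithLp.toLp 2 x) (WithLp.toLp 2 (A *ᵥ x))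
  simp only [EuclideanSpace.inner_eq_star_dotProduct, star_trivial] at h
  rw [dotProduct_comm, ← h]
  refine Finset.sum_congr rfl fun i _ => ?_
  have h2 : (A *ᵥ x) ⬝ᵥ (hA.eigenvectorBasis i).ofLp
      = hA.eigenvalues i * ((hA.eigenvectorBasis i).ofLp ⬝ᵥ x) := by
    rw [dotProduct_comm, dotProduct_mulVec, ← mulVec_transpose,
      show Aᵀ = A by simpa [conjTranspose_eq_transpose_of_trivial] using hA.eq,
      hA.mulVec_eigenvectorBasis, smul_dotProduct, smul_eq_mul]
  rw [h2]
  ring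

lemma dotProduct_self_eq_sum {A : Matrix ι ι ℝ} (hA : A.IsHermitian) (x : ι → ℝ) :
    x ⬝ᵥ x = ∑ i, ((hA.eigenvectorBasis i).ofLp ⬝ᵥ x) ^ 2 := by
  have h := hA.eigenvectorBasis.sum_inner_mul_inner (WithLp.toLp 2 x) (WithLp.toLp 2 x)
  simp only [EuclideanSpace.inner_eq_star_dotProduct, star_trivial] at h
  rw [← h]
  refine Finset.sum_congr rfl fun i _ => ?_
  rw [dotProduct_comm x]
  ring

/-- Weyl's inequality in counting form: if the quadratic form of `B` is at most that of `A` on a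
subspace cut out by the equations `z p ⬝ᵥ x = 0`, then `A` has at most `card P` more eigenvalues
`≤ t` than `B`. -/
lemma card_eigenvalues_le {P : Type*} [Fintype P] {A B : Matrix ι ι ℝ} (hA : A.IsHermitian)
    (hB : B.IsHermitian) (z : P → ι → ℝ)
    (h : ∀ x : ι → ℝ, (∀ p, z p ⬝ᵥ x = 0) → x ⬝ᵥ (B *ᵥ x) ≤ x ⬝ᵥ (A *ᵥ x)) (t : ℝ) :
    Fintype.card {i // hA.eigenvalues i ≤ t}
      ≤ Fintype.card {i // hB.eigenvalues i ≤ t} + Fintype.card P := by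
  by_contra! hcon
  -- More unknowns than equations: a nonzero `x` orthogonal to the eigenvectors of `A` above `t`,
  -- to those of `B` at most `t`, and to all `z p`.
  let φ : (ι → ℝ) →ₗ[ℝ] ({i // ¬ hA.eigenvalues i ≤ t} ⊕ {i // hB.eigenvalues i ≤ t} ⊕ P → ℝ) :=
    Matrix.mulVecLin (Matrix.of (Sum.elim (fun i => (hA.eigenvectorBasis i).ofLp)
      (Sum.elim (fun i => (hB.eigenvectorBasis i).ofLp) z)))
  have hdim : Module.finrank ℝ
      ({i // ¬ hA.eigenvalues i ≤ t} ⊕ {i // hB.eigenvalues i ≤ t} ⊕ P → ℝ)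
      < Module.finrank ℝ (ι → ℝ) := by
    have hc := Fintype.card_subtype_compl (fun i => hA.eigenvalues i ≤ t)
    have hle := Fintype.card_subtype_le (fun i => hA.eigenvalues i ≤ t)
    simp only [Module.finrank_fintype_fun_eq_card, Fintype.card_sum]
    omega
  obtain ⟨x, hxk, hx0⟩ :=
    (Submodule.ne_bot_iff _).1 (LinearMap.ker_ne_bot_of_finrank_lt (f := φ) hdim)
  have hφ : φ x = 0 := hxk
  have hxA : ∀ i, ¬ hA.eigenvalues i ≤ t → (hA.eigenvectorBasis i).ofLp ⬝ᵥ x = 0 :=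
    fun i hi => congrFun hφ (Sum.inl ⟨i, hi⟩)
  have hxB : ∀ i, hB.eigenvalues i ≤ t → (hB.eigenvectorBasis i).ofLp ⬝ᵥ x = 0 :=
    fun i hi => congrFun hφ (Sum.inr (Sum.inl ⟨i, hi⟩))
  have hxz : ∀ p, z p ⬝ᵥ x = 0 := fun p => congrFun hφ (Sum.inr (Sum.inr p))
  have h1 : x ⬝ᵥ (A *ᵥ x) ≤ t * (x ⬝ᵥ x) := by
    rw [dotProduct_mulVec_eq_sum hA, dotProduct_self_eq_sum hA, Finset.mul_sum]
    refine Finset.sum_le_sum fun i _ => ?_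
    by_cases hi : hA.eigenvalues i ≤ t
    · exact mul_le_mul_of_nonneg_right hi (sq_nonneg _)
    · simp [hxA i hi]
  have hpos : x ⬝ᵥ x ≠ 0 := fun h' => hx0 (dotProduct_self_eq_zero.1 h')
  have h2 : t * (x ⬝ᵥ x) < x ⬝ᵥ (B *ᵥ x) := by
    rw [dotProduct_self_eq_sum hB] at hpos
    rw [dotProduct_mulVec_eq_sum hB, dotProduct_self_eq_sum hB, Finset.mul_sum]
    obtain ⟨i, hi, hne⟩ := Finset.exists_ne_zero_of_sum_ne_zero hpos
    refine Finset.sum_lt_sum (fun i _ => ?_) ⟨i, hi, ?_⟩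
    · by_cases hi : hB.eigenvalues i ≤ t
      · simp [hxB i hi]
      · exact mul_le_mul_of_nonneg_right (not_le.1 hi).le (sq_nonneg _)
    · have hit : ¬ hB.eigenvalues i ≤ t := fun hle => hne (by simp [hxB i hle])
      exact mul_lt_mul_of_pos_right (not_le.1 hit) (lt_of_le_of_ne (sq_nonneg _) hne.symm)
  linarith [h x hxz]

/-- A symmetric matrix has at most a simple eigenvalue `t` as soon as its `t`-eigenvectors are
determined by one coordinate. -/
lemma count_roots_charpoly_le_one {A : Matrix ι ι ℝ} (hA : A.IsHermitian) (t : ℝ) (q : ι)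
    (h : ∀ x : ι → ℝ, A *ᵥ x = t • x → x q = 0 → x = 0) :
    A.charpoly.roots.count t ≤ 1 := by
  rw [hA.roots_charpoly_eq_eigenvalues, Multiset.count_map]
  change ((Finset.univ.filter fun i => t = hA.eigenvalues i).card) ≤ 1
  rw [Finset.card_le_one]
  intro i hi j hj
  simp only [Finset.mem_filter, Finset.mem_univ, true_and] at hi hj
  by_contra hij
  set b := hA.eigenvectorBasis with hb
  have hbi := hA.mulVec_eigenvectorBasis i
  have hbj := hA.mulVec_eigenvectorBasis j
  rw [← hi] at hbi
  rw [← hj] at hbj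
  have hcomb := h ((b j) q • (b i).ofLp - (b i) q • (b j).ofLp) (by
    rw [mulVec_sub, mulVec_smul, mulVec_smul, hbi, hbj]
    ext r; simp [hb]; ring) (by simp [mul_comm])
  have hlin : (b j) q • b i - (b i) q • b j = 0 := by
    ext r; simpa using congrFun hcomb r
  have hq : (b j) q = 0 := by
    have := congrArg (fun w => inner ℝ (b i) w) hlin
    simpa [inner_sub_right, inner_smul_right, b.inner_eq_zero hij] using this
  have := h (b j).ofLp hbj hq
  exact b.orthonormal.ne_zero j (by ext r; simpa using congrFun this r)

lemma card_eigenvalues_eq_countP {A : Matrix ι ι ℝ} (hA : A.IsHermitian) (t : ℝ) :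
    Fintype.card {i // hA.eigenvalues i ≤ t} = A.charpoly.roots.countP (· ≤ t) := by
  rw [hA.roots_charpoly_eq_eigenvalues, Multiset.countP_map, Fintype.card_subtype]
  rfl

end Spectral

/-! ### The interconnected graph -/

section Graphs

open Matrix

/-- The Laplacian of `A_k` ignores loops, so the condition `b ≠ a` may be dropped. -/
lemma antiregLap_mulVec_s6 (k : ℕ) (v : Fin k → ℝ) (a : Fin k) :
    (antiregLap k *ᵥ v) a = ∑ b : Fin k, if b.val < k - a.val then v a - v b else 0 := by
  have hdeg : ((Finset.univ.filter fun m : Fin k => m ≠ a ∧ a.val + m.val + 2 ≤ k + 1).card : ℝ)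
      = ∑ m : Fin k, if m ≠ a ∧ a.val + m.val + 2 ≤ k + 1 then (1 : ℝ) else 0 := by
    rw [Finset.sum_boole]
  have hsplit : ∀ b : Fin k, antiregLap k a b * v b
      = (if a = b then ((Finset.univ.filter
          fun m : Fin k => m ≠ a ∧ a.val + m.val + 2 ≤ k + 1).card : ℝ) * v a else 0)
        - (if b ≠ a ∧ a.val + b.val + 2 ≤ k + 1 then v b else 0) := by
    intro b
    unfold antiregLap
    rw [of_apply]
    by_cases hab : a = b
    · subst hab; simp
    · by_cases hle : a.val + b.val + 2 ≤ k + 1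
      · simp [hab, hle, Ne.symm hab]
      · simp [hab, hle]
  rw [mulVec, dotProduct, Finset.sum_congr rfl fun b _ => hsplit b, Finset.sum_sub_distrib,
    Finset.sum_ite_eq, if_pos (Finset.mem_univ _), hdeg, Finset.sum_mul,
    ← Finset.sum_sub_distrib]
  refine Finset.sum_congr rfl fun b _ => ?_
  by_cases hab : b = a
  · subst hab; simp
  · have hiff : a.val + b.val + 2 ≤ k + 1 ↔ b.val < k - a.val := by have := a.isLt; omega
    by_cases hle : b.val < k - a.val <;> simp [hab, hiff, hle]

/-- A `μ`-eigenvector of the Laplacian of `A_k` vanishing at the vertex `κ̄` is zero. -/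
lemma antiregLap_eigenvector_eq_zero (k : ℕ) (hk : 2 ≤ k) (μ : ℝ) (v : Fin k → ℝ)
    (h : antiregLap k *ᵥ v = μ • v) (h0 : v ⟨(k + 1) / 2 - 1, by omega⟩ = 0) : v = 0 := by
  let w : ℕ → ℝ := fun i => if hi : i < k then v ⟨i, hi⟩ else 0
  have hw : ∀ a : Fin k, w a = v a := fun a => by simp [w]
  have hmain := antireg_middle k μ w (fun a ha => by
    have h1 := congrFun h ⟨a, ha⟩
    rw [antiregLap_mulVec_s6] at h1
    simp only [← hw] at h1
    rw [Fin.sum_univ_eq_sum_range (fun b => if b < k - a then w a - w b else 0) k,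
      ← Finset.sum_filter,
      show (Finset.range k).filter (· < k - a) = Finset.range (k - a) by
        ext; simp; omega,
      Finset.sum_sub_distrib, Finset.sum_const, Finset.card_range, nsmul_eq_mul,
      Nat.cast_sub ha.le, Pi.smul_apply, smul_eq_mul, ← hw] at h1
    linarith) (by rw [← h0, ← hw])
  ext a
  rw [← hw]
  exact hmain a a.isLt

lemma antiregLap_isHermitian (k : ℕ) : (antiregLap k).IsHermitian := by
  refine IsHermitian.ext fun i j => ?_
  unfold antiregLap
  by_cases h : i = j
  · subst h; simp
  · simp [h, Ne.symm h, add_comm]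

lemma copiesLap_mulVec (n k : ℕ) (x : Fin n × Fin k → ℝ) (c : Fin n) (a : Fin k) :
    (copiesLap n k *ᵥ x) (c, a) = (antiregLap k *ᵥ fun b => x (c, b)) a := by
  simp only [copiesLap, mulVec, dotProduct, kroneckerMap_apply, Fintype.sum_prod_type, one_apply]
  rw [Finset.sum_eq_single c]
  · simp
  · intro b _ hb; simp [Ne.symm hb]
  · simp

lemma copiesLap_isHermitian (n k : ℕ) : (copiesLap n k).IsHermitian := by
  refine IsHermitian.ext fun i j => ?_
  have := (antiregLap_isHermitian k).apply i.2 j.2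
  simp only [star_trivial] at this
  simp [copiesLap, kroneckerMap_apply, one_apply, this, eq_comm]

lemma interLap_mulVec (n k : ℕ) (hk : 2 ≤ k) (x : Fin n × Fin k → ℝ) :
    interLap n k hk *ᵥ x
      = copiesLap n k *ᵥ x + ∑ p, (zvec n k hk p ⬝ᵥ x) • zvec n k hk p := by
  rw [interLap, add_mulVec, sum_mulVec]
  congr 1
  refine Finset.sum_congr rfl fun p _ => ?_
  rw [vecMulVec_mulVec]
  ext; simp [mul_comm]

lemma interLap_isHermitian (n k : ℕ) (hk : 2 ≤ k) : (interLap n k hk).IsHermitian := by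
  refine (copiesLap_isHermitian n k).add ?_
  refine IsHermitian.ext fun i j => ?_
  simp [Matrix.sum_apply, vecMulVec_apply, mul_comm]

lemma interLap_dotProduct (n k : ℕ) (hk : 2 ≤ k) (x : Fin n × Fin k → ℝ) :
    x ⬝ᵥ (interLap n k hk *ᵥ x)
      = x ⬝ᵥ (copiesLap n k *ᵥ x) + ∑ p, (zvec n k hk p ⬝ᵥ x) ^ 2 := by
  rw [interLap_mulVec, dotProduct_add, dotProduct_sum]
  congr 1
  refine Finset.sum_congr rfl fun p _ => ?_
  rw [dotProduct_smul, smul_eq_mul, dotProduct_comm x, sq]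

lemma zvec_dotProduct (n k : ℕ) (hk : 2 ≤ k) (p : Fin (n - 1)) (x : Fin n × Fin k → ℝ) :
    zvec n k hk p ⬝ᵥ x
      = x (⟨p.val, by have := p.isLt; omega⟩, ⟨k - 1, by omega⟩)
        - x (⟨p.val + 1, by have := p.isLt; omega⟩, ⟨(k + 1) / 2 - 1, by omega⟩) := by
  simp [zvec, dotProduct, sub_mul, Finset.sum_sub_distrib]

/-- If `μ` is an eigenvalue of `A_k`, then any `μ`-eigenvector of `𝓛` is orthogonal to all `z_p`:
pairing the eigenvalue equation with `e_c ⊗ v` for `c = n, n-1, …, 2` kills the coefficients one by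
one, since `v` does not vanish at `κ̄`. -/
lemma zvec_dotProduct_eq_zero (n k : ℕ) (hk : 2 ≤ k) (μ : ℝ) (v : Fin k → ℝ)
    (hv : antiregLap k *ᵥ v = μ • v) (hv0 : v ≠ 0) (x : Fin n × Fin k → ℝ)
    (hx : interLap n k hk *ᵥ x = μ • x) : ∀ p, zvec n k hk p ⬝ᵥ x = 0 := by
  have hmid : v ⟨(k + 1) / 2 - 1, by omega⟩ ≠ 0 := fun h =>
    hv0 (antiregLap_eigenvector_eq_zero k hk μ v hv h)
  have hpair : ∀ c : Fin n, ∑ p, (zvec n k hk p ⬝ᵥ x) *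
      (zvec n k hk p ⬝ᵥ fun q : Fin n × Fin k => if q.1 = c then v q.2 else 0) = 0 := by
    intro c
    set y : Fin n × Fin k → ℝ := fun q => if q.1 = c then v q.2 else 0 with hy
    have hLy : copiesLap n k *ᵥ y = μ • y := by
      ext ⟨c', a⟩
      rw [copiesLap_mulVec]
      by_cases hc : c' = c
      · have := congrFun hv a
        simpa [hy, hc] using this
      · have hzero : (fun b : Fin k => y (c', b)) = 0 := by ext b; simp [hy, hc]
        rw [hzero, mulVec_zero]
        simp [hy, hc]
    have h1 : y ⬝ᵥ (interLap n k hk *ᵥ x) = μ * (y ⬝ᵥ x) := by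
      rw [hx, dotProduct_smul, smul_eq_mul]
    have hT : (copiesLap n k)ᵀ = copiesLap n k := by
      simpa [conjTranspose_eq_transpose_of_trivial] using (copiesLap_isHermitian n k).eq
    rw [interLap_mulVec, dotProduct_add, dotProduct_mulVec, ← mulVec_transpose, hT, hLy,
      smul_dotProduct, smul_eq_mul, add_eq_left, dotProduct_sum] at h1
    rw [← h1]
    refine Finset.sum_congr rfl fun p _ => ?_
    rw [dotProduct_smul, smul_eq_mul, dotProduct_comm y]
  -- Downward induction on `p`, phrased through `d = n - 1 - p`.
  have hdown : ∀ d : ℕ, ∀ p : Fin (n - 1), n - 1 - p.val ≤ d → zvec n k hk p ⬝ᵥ x = 0 := by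
    intro d
    induction d with
    | zero => intro p hp; have := p.isLt; omega
    | succ d ih =>
      intro p hp
      have h := hpair ⟨p.val + 1, by have := p.isLt; omega⟩
      rw [Finset.sum_eq_single p] at h
      · refine (mul_eq_zero.1 h).resolve_right ?_
        rw [zvec_dotProduct]
        simpa [Fin.ext_iff] using hmid
      · intro p' _ hne
        have hne' : p'.val ≠ p.val := fun h => hne (Fin.ext h)
        by_cases hp' : p'.val = p.val + 1
        · rw [ih p' (by have := p'.isLt; omega), zero_mul]
        · rw [zvec_dotProduct n k hk p' fun q => if q.1 = _ then v q.2 else 0]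
          simp [Fin.ext_iff, hp', hne']
      · simp
  exact fun p => hdown _ p le_rfl

/-- For an eigenvalue `μ` of `A_k`, a `μ`-eigenvector of `𝓛` vanishing at vertex `κ̄` of the first
copy is zero: vanishing propagates from each copy to the next along the edge `z_p`. -/
lemma interLap_eigenvector_eq_zero (n k : ℕ) (hk : 2 ≤ k) (hn : 2 ≤ n) (μ : ℝ) (v : Fin k → ℝ)
    (hv : antiregLap k *ᵥ v = μ • v) (hv0 : v ≠ 0) (x : Fin n × Fin k → ℝ)
    (hx : interLap n k hk *ᵥ x = μ • x)
    (h0 : x (⟨0, by omega⟩, ⟨(k + 1) / 2 - 1, by omega⟩) = 0) : x = 0 := by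
  have hz := zvec_dotProduct_eq_zero n k hk μ v hv hv0 x hx
  have hLx : copiesLap n k *ᵥ x = μ • x := by
    rw [← hx, interLap_mulVec]; simp [hz]
  have hblock : ∀ c : Fin n, x (c, ⟨(k + 1) / 2 - 1, by omega⟩) = 0 → ∀ a, x (c, a) = 0 := by
    intro c hc a
    refine congrFun (antiregLap_eigenvector_eq_zero k hk μ (fun b => x (c, b)) ?_ hc) a
    ext b
    rw [← copiesLap_mulVec, hLx]; rfl
  have hall : ∀ c : ℕ, ∀ hc : c < n, ∀ a, x (⟨c, hc⟩, a) = 0 := by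
    intro c
    induction c with
    | zero => intro hc; exact hblock _ h0
    | succ c ih =>
      intro hc
      refine hblock _ ?_
      have := hz ⟨c, by omega⟩
      rw [zvec_dotProduct, ih (by omega), zero_sub, neg_eq_zero] at this
      exact this
  ext ⟨c, a⟩
  exact hall c.val c.isLt a

lemma copiesLap_charpoly (n k : ℕ) : (copiesLap n k).charpoly = (antiregLap k).charpoly ^ n := by
  have h : copiesLap n k = reindex (Equiv.prodComm _ _) (Equiv.prodComm _ _)
      (blockDiagonal fun _ : Fin n => antiregLap k) := one_kronecker (antiregLap k)
  have hc : (blockDiagonal fun _ : Fin n => antiregLap k).charmatrix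
      = blockDiagonal fun _ : Fin n => (antiregLap k).charmatrix := by
    ext ⟨a, c⟩ ⟨b, d⟩
    by_cases hcd : c = d <;> by_cases hab : a = b <;>
      simp [blockDiagonal_apply, hcd, hab]
  rw [h, charpoly_reindex, charpoly, hc, det_blockDiagonal, Finset.prod_const, Finset.card_univ,
    Fintype.card_fin, charpoly]

end Graphs

/-! ### Sorted enumerations of a multiset -/

section Counting

/-- For a sorted enumeration, `f i ≤ t` means that `i` is below the number of entries `≤ t`. -/
lemma le_iff_lt_countP (N : ℕ) (f : ℕ → ℝ) (hf : Monotone f) (t : ℝ) (i : ℕ) (hi : i < N) :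
    f i ≤ t ↔ i < ((Multiset.range N).map f).countP (· ≤ t) := by
  rw [Multiset.countP_map]
  change _ ↔ i < ((Finset.range N).filter fun j => f j ≤ t).card
  constructor
  · intro h
    have hsub : Finset.range (i + 1) ⊆ (Finset.range N).filter fun j => f j ≤ t := by
      intro j hj
      simp only [Finset.mem_range, Finset.mem_filter] at hj ⊢
      exact ⟨by omega, (hf (by omega)).trans h⟩
    have := Finset.card_le_card hsub
    rw [Finset.card_range] at this
    omega
  · intro h
    by_contra hcon
    have hsub : ((Finset.range N).filter fun j => f j ≤ t) ⊆ Finset.range i := by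
      intro j hj
      simp only [Finset.mem_range, Finset.mem_filter] at hj ⊢
      by_contra hij
      exact hcon ((hf (by omega)).trans hj.2)
    have := Finset.card_le_card hsub
    rw [Finset.card_range] at this
    omega

lemma ne_of_count_le_one (N : ℕ) (f : ℕ → ℝ) (i j : ℕ) (hi : i < N) (hj : j < N) (hij : i ≠ j)
    (h : ((Multiset.range N).map f).count (f j) ≤ 1) : f i ≠ f j := by
  intro heq
  rw [Multiset.count_map] at h
  change ((Finset.range N).filter fun m => f j = f m).card ≤ 1 at h
  rw [Finset.card_le_one] at h
  exact hij (h i (by simp [hi, heq]) j (by simp [hj]))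

end Counting

/-- Lemma: lower interlacing bound.  Eigenvalues are encoded
0-indexed: each list is monotone on `ℕ` and enumerates the roots of the
characteristic polynomial with multiplicity, so e.g. `ℓ i` is the `(i+1)`-th
smallest eigenvalue of `𝓛` for `i < n*k`.  For every `j ∈ {0,…,k-1}` (so the
1-indexed positions are `nj+1` and `nj+2`):
`λ_{nj+1}(L̄) = λ_{nj+1}(𝓛) = λ_{nj+2}(L̄) < λ_{nj+2}(𝓛)`, and the common value
is the `(j+1)`-th smallest eigenvalue of `L_A^{(k)}`. -/
theorem interLap_lower_eigenvalue_bounds (k n : ℕ) (hk : 2 ≤ k) (hn : 2 ≤ n)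
    (ℓbar ℓ μ : ℕ → ℝ)
    (mbar : Monotone ℓbar) (mℓ : Monotone ℓ) (mμ : Monotone μ)
    (rbar : (copiesLap n k).charpoly.roots = (Multiset.range (n * k)).map ℓbar)
    (rℓ : (interLap n k hk).charpoly.roots = (Multiset.range (n * k)).map ℓ)
    (rμ : (antiregLap k).charpoly.roots = (Multiset.range k).map μ) :
    ∀ j : ℕ, j < k →
      ℓbar (n * j) = ℓ (n * j) ∧ ℓ (n * j) = ℓbar (n * j + 1) ∧
      ℓbar (n * j + 1) < ℓ (n * j + 1) ∧ ℓbar (n * j) = μ j := by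
  intro j hj
  have hlast : n * j + n ≤ n * k := by
    calc n * j + n = n * (j + 1) := by ring
      _ ≤ n * k := Nat.mul_le_mul_left n hj
  have hcount : ∀ t : ℝ, ((Multiset.range (n * k)).map ℓbar).countP (· ≤ t)
      = n * ((Multiset.range k).map μ).countP (· ≤ t) := by
    intro t
    rw [← rbar, ← rμ, copiesLap_charpoly, Polynomial.roots_pow, Multiset.countP_nsmul]
  have hμcount : j + 1 ≤ ((Multiset.range k).map μ).countP (· ≤ μ j) :=
    (le_iff_lt_countP k μ mμ (μ j) j hj).1 le_rfl
  have hbarcount : n * j + n ≤ ((Multiset.range (n * k)).map ℓbar).countP (· ≤ μ j) := by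
    rw [hcount]
    calc n * j + n = n * (j + 1) := by ring
      _ ≤ _ := Nat.mul_le_mul_left n hμcount
  have hbar_le : ℓbar (n * j + 1) ≤ μ j :=
    (le_iff_lt_countP (n * k) ℓbar mbar _ _ (by omega)).2 (by omega)
  have hbar_ge : μ j ≤ ℓbar (n * j) := by
    refine (le_iff_lt_countP k μ mμ _ j hj).2 ?_
    have := (le_iff_lt_countP (n * k) ℓbar mbar (ℓbar (n * j)) (n * j) (by omega)).1 le_rfl
    rw [hcount] at this
    exact lt_of_mul_lt_mul_left this (Nat.zero_le n)
  have hbar_mono : ℓbar (n * j) ≤ ℓbar (n * j + 1) := mbar (by omega)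
  have hW1 : ∀ t : ℝ, ((Multiset.range (n * k)).map ℓ).countP (· ≤ t)
      ≤ ((Multiset.range (n * k)).map ℓbar).countP (· ≤ t) := by
    intro t
    have := card_eigenvalues_le (interLap_isHermitian n k hk) (copiesLap_isHermitian n k)
      (fun p : Empty => p.elim) (fun x _ => by
        rw [interLap_dotProduct]
        exact le_add_of_nonneg_right (Finset.sum_nonneg fun p _ => sq_nonneg _)) t
    rw [card_eigenvalues_eq_countP, card_eigenvalues_eq_countP, rℓ, rbar] at this
    simpa using this
  have hW2 : ∀ t : ℝ, ((Multiset.range (n * k)).map ℓbar).countP (· ≤ t)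
      ≤ ((Multiset.range (n * k)).map ℓ).countP (· ≤ t) + (n - 1) := by
    intro t
    have := card_eigenvalues_le (copiesLap_isHermitian n k) (interLap_isHermitian n k hk)
      (zvec n k hk) (fun x hx => by
        rw [interLap_dotProduct]
        simp [hx]) t
    rw [card_eigenvalues_eq_countP, card_eigenvalues_eq_countP, rℓ, rbar, Fintype.card_fin] at this
    exact this
  have hℓ_le : ℓ (n * j) ≤ μ j :=
    (le_iff_lt_countP (n * k) ℓ mℓ _ _ (by omega)).2 (by have := hW2 (μ j); omega)
  have hℓ_ge : ∀ i < n * k, ℓbar i ≤ ℓ i := fun i hi =>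
    (le_iff_lt_countP (n * k) ℓbar mbar _ _ hi).2
      (((le_iff_lt_countP (n * k) ℓ mℓ (ℓ i) i hi).1 le_rfl).trans_le (hW1 _))
  have hge0 := hℓ_ge (n * j) (by omega)
  have hge1 := hℓ_ge (n * j + 1) (by omega)
  have hℓ_eq : ℓ (n * j) = μ j := by linarith
  have hsimple : ((Multiset.range (n * k)).map ℓ).count (μ j) ≤ 1 := by
    rw [← rℓ]
    have hmem : μ j ∈ (antiregLap k).charpoly.roots := by
      rw [rμ]
      exact Multiset.mem_map_of_mem μ (Multiset.mem_range.2 hj)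
    rw [(antiregLap_isHermitian k).roots_charpoly_eq_eigenvalues] at hmem
    obtain ⟨i, -, hi⟩ := Multiset.mem_map.1 hmem
    have hi' : (antiregLap_isHermitian k).eigenvalues i = μ j := hi
    have hv := (antiregLap_isHermitian k).mulVec_eigenvectorBasis i
    rw [hi'] at hv
    refine count_roots_charpoly_le_one (interLap_isHermitian n k hk) (μ j) _
      (interLap_eigenvector_eq_zero n k hk hn (μ j) _ hv fun h => ?_)
    exact (antiregLap_isHermitian k).eigenvectorBasis.orthonormal.ne_zero i
      (by ext r; simpa using congrFun h r)
  have hne : ℓ (n * j + 1) ≠ ℓ (n * j) :=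
    ne_of_count_le_one (n * k) ℓ _ _ (by omega) (by omega) (by omega) (hℓ_eq ▸ hsimple)
  refine ⟨by linarith, by linarith, ?_, by linarith⟩
  have : ℓ (n * j) < ℓ (n * j + 1) := lt_of_le_of_ne (mℓ (by omega)) hne.symm
  linarith
end

section
/- Let A be a real square matrix of order m such that the first entry of every eigenvector of A is nonzero (i.e., whenever v ∈ ℝ^m is nonzero and Av = λv for some real λ, then v_1 ≠ 0). Let 𝒜 be the real square matrix of order m+1 given by 𝒜 = [[0, 0ᵀ], [0, A]] + (e_1 − e_2)(e_1 − e_2)ᵀ, where e_1, e_2 ∈ ℝ^{m+1} are standard basis vectors. Then the first entry of every eigenvector of 𝒜 is nonzero: whenever w ∈ ℝ^{m+1} is nonzero and 𝒜w = μw for some real μ, then w_1 ≠ 0. -/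
/-! Suppose `𝒜 w = μ w` with `w₁ = 0`. The first row of this equation reads `w₁ - w₂ = μ w₁`, so
`w₂ = 0` as well. Hence the rank-one term `(e₁ - e₂)(e₁ - e₂)ᵀ` kills `w`, and the remaining rows
say that `v = (w₂, …, w_{m+1})` satisfies `A v = μ v`. Since `v` is nonzero with first entry
`w₂ = 0`, this contradicts the hypothesis on `A`. -/

/-- Theorem: preservation of nonzero first eigenvector entry.
If every eigenvector of the real `m × m` matrix `A` has nonzero first entry,
then so does every eigenvector of
`𝒜 = [[0, 0ᵀ], [0, A]] + (e₁ - e₂)(e₁ - e₂)ᵀ` of order `m+1`. -/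
theorem first_entry_nonzero_extension (m : ℕ) (hm : 0 < m)
    (A : Matrix (Fin m) (Fin m) ℝ)
    (hA : ∀ (lam : ℝ) (v : Fin m → ℝ), v ≠ 0 → A.mulVec v = lam • v → v ⟨0, hm⟩ ≠ 0) :
    ∀ (mu : ℝ) (w : Fin (m + 1) → ℝ), w ≠ 0 →
      ((Matrix.of fun i j : Fin (m + 1) =>
          if hi : i.val = 0 then 0
          else if hj : j.val = 0 then 0
          else A ⟨i.val - 1, by have := i.isLt; omega⟩ ⟨j.val - 1, by have := j.isLt; omega⟩) +
        Matrix.vecMulVec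
          (fun i : Fin (m + 1) => if i.val = 0 then 1 else if i.val = 1 then -1 else 0)
          (fun i : Fin (m + 1) => if i.val = 0 then 1 else if i.val = 1 then -1 else 0)).mulVec w
        = mu • w →
      w ⟨0, Nat.succ_pos m⟩ ≠ 0 := by
  intro mu w hw h h0
  obtain ⟨n, rfl⟩ : ∃ n, m = n + 1 := ⟨m - 1, by omega⟩
  have h0' : w 0 = 0 := h0
  rw [Matrix.add_mulVec, Matrix.vecMulVec_mulVec] at h
  have h1 : w 1 = 0 := by
    have := congrFun h 0
    simpa [Matrix.mulVec, dotProduct, Fin.sum_univ_succ, h0'] using this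
  refine hA mu (fun i => w i.succ) ?_ ?_ h1
  · intro hv
    apply hw
    funext i
    refine Fin.cases h0' (fun j => congrFun hv j) i
  · funext i
    have := congrFun h i.succ
    simpa [Matrix.mulVec, dotProduct, Fin.sum_univ_succ, h0', h1] using this
end
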